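/- Let J ⊆ Δ. Identify ℚ[W^J] and each ℚ[W^{J∪{α}}] with their ℚ-linear duals via the standard bases, so that the dual map ∂* : ℚ[W^J] → ⊕_{α ∈ Δ\J} ℚ[W^{J∪{α}}] of ∂ sends a basis element w' ∈ W^J to the tuple whose α-component is the unique w ∈ W^{J∪{α}} with w W_{J∪{α}} = w' W_{J∪{α}}. For w' ∈ V^J set σ(w') = Σ_{v ∈ W_{Δ\J}} (−1)^{ℓ(v)} (w'v)^J ∈ ℚ[W^J]. Then the family {σ(w') : w' ∈ V^J} is linearly independent over ℚ and is contained in the kernel of ∂*; consequently dim_ℚ M_J(ℚ) ≥ |V^J|. -/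

import Mathlib

/-! Common framework: a reduced (crystallographic) root system `Φ` in a real vector
space `V`, with Weyl group `W` (generated by the reflections `s_α`, `α ∈ Φ`, inside the
group of linear automorphisms of `V`), a base `Δ` of simple roots with positive system
`Pos = Φ⁺`, and the associated combinatorics. -/

open scoped Classical Pointwise

namespace PaperSp

variable {V : Type} [AddCommGroup V] [Module ℝ V]

/-- The data of a reduced crystallographic root system in `V`:  a finite spanning set
`Phi` of nonzero vectors together with, for each root `α`, a linear functional
`pairing α = ⟨·, α∨⟩` taking the value `2` at `α`, such that the associated reflections
`s_α : β ↦ β − ⟨β, α∨⟩α` preserve `Phi`, all pairings are integral, and the only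
multiples of a root `α` which are roots are `±α`. -/
structure RootSystemData (V : Type) [AddCommGroup V] [Module ℝ V] : Type where
  Phi : Set V
  pairing : V → V →ₗ[ℝ] ℝ
  pairing_self : ∀ α, α ∈ Phi → pairing α α = 2
  finite : Phi.Finite
  span_top : Submodule.span ℝ Phi = ⊤
  zero_not_mem : (0 : V) ∉ Phi
  crystallographic : ∀ α ∈ Phi, ∀ β ∈ Phi, ∃ n : ℤ, pairing α β = (n : ℝ)
  reduced : ∀ α ∈ Phi, ∀ t : ℝ, t • α ∈ Phi → t = 1 ∨ t = -1
  reflect_mem : ∀ α ∈ Phi, ∀ β ∈ Phi, β - pairing α β • α ∈ Phi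

/-- The reflection `s_α` associated to a root `α` (the identity if `α ∉ Φ`). -/
noncomputable def RootSystemData.refl (R : RootSystemData V) (α : V) : V ≃ₗ[ℝ] V :=
  if h : α ∈ R.Phi then Module.reflection (R.pairing_self α h) else 1

/-- The set of reflections `{s_α : α ∈ K}` associated to a set `K` of roots. -/
noncomputable def refls (R : RootSystemData V) (K : Set V) : Set (V ≃ₗ[ℝ] V) :=
  {s | ∃ α ∈ K, s = R.refl α}

/-- The Weyl group `W`, generated by all reflections `s_α`, `α ∈ Φ`. -/
noncomputable def weylGroup (R : RootSystemData V) : Subgroup (V ≃ₗ[ℝ] V) :=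
  Subgroup.closure (refls R R.Phi)

/-- The subgroup `W_J` generated by the reflections `s_α`, `α ∈ J`. -/
noncomputable def WsubJ (R : RootSystemData V) (J : Set V) : Subgroup (V ≃ₗ[ℝ] V) :=
  Subgroup.closure (refls R J)

/-- The word length of `w` with respect to a generating set `S` of a group. -/
noncomputable def lengthWrt {G : Type*} [Group G] (S : Set G) (w : G) : ℕ :=
  sInf {n | ∃ ls : List G, ls.length = n ∧ (∀ x ∈ ls, x ∈ S) ∧ ls.prod = w}

/-- The length function `ℓ` on `W` with respect to the simple reflections
`S = {s_α : α ∈ Δ}`. -/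
noncomputable def len (R : RootSystemData V) (Δ : Set V) (w : V ≃ₗ[ℝ] V) : ℕ :=
  lengthWrt (refls R Δ) w

/-- `Pos` and `Δ` form a positive system with base `Δ` for the root system `R`:
`Φ = Pos ⊔ (−Pos)`, `Δ ⊆ Pos` is linearly independent, and every positive root is a
nonnegative integral combination of simple roots. -/
structure IsBase (R : RootSystemData V) (Pos Δ : Set V) : Prop where
  pos_sub : Pos ⊆ R.Phi
  mem_or_neg : ∀ α ∈ R.Phi, α ∈ Pos ∨ -α ∈ Pos
  not_both : ∀ α : V, ¬(α ∈ Pos ∧ -α ∈ Pos)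
  delta_sub : Δ ⊆ Pos
  indep : LinearIndependent ℝ (fun a : Δ => (a : V))
  decomp : ∀ β ∈ Pos, ∃ c : V →₀ ℕ, (c.support : Set V) ⊆ Δ ∧
    β = c.sum (fun a m => (m : ℝ) • a)

/-- The set `W^J = {w ∈ W : w(α) ∈ Φ⁺ for all α ∈ J}` of minimal length representatives
of `W/W_J`. -/
noncomputable def WupJ (R : RootSystemData V) (Pos : Set V) (J : Set V) :
    Set (V ≃ₗ[ℝ] V) :=
  {w | w ∈ weylGroup R ∧ ∀ α ∈ J, w α ∈ Pos}

/-- The set `V^J = W^J \ ⋃_{α ∈ Δ\J} W^{J∪{α}}`. -/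
noncomputable def VupJ (R : RootSystemData V) (Pos Δ : Set V) (J : Set V) :
    Set (V ≃ₗ[ℝ] V) :=
  {w | w ∈ WupJ R Pos J ∧ ∀ α ∈ Δ, α ∉ J → w ∉ WupJ R Pos (J ∪ {α})}

/-- `Φ_J(1) = Φ⁻ \ (Φ⁻ ∩ W_J·J)`. -/
noncomputable def PhiJone (R : RootSystemData V) (Pos : Set V) (J : Set V) : Set V :=
  (R.Phi \ Pos) \ {β | ∃ v ∈ WsubJ R J, ∃ α ∈ J, β = v α}

/-- `Φ_J(w) = w · Φ_J(1)`. -/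
noncomputable def PhiJ (R : RootSystemData V) (Pos : Set V) (J : Set V)
    (w : V ≃ₗ[ℝ] V) : Set V :=
  (fun x => w x) '' (PhiJone R Pos J)

/-- `hProjJ R Pos J pJ` says that `pJ` is the projection `w ↦ (w)^J` sending an element
of `W` to the unique element of `W^J` in the coset `w W_J`. -/
noncomputable def IsProjJ (R : RootSystemData V) (Pos : Set V) (J : Set V)
    (pJ : (V ≃ₗ[ℝ] V) → (V ≃ₗ[ℝ] V)) : Prop :=
  ∀ w ∈ weylGroup R, pJ w ∈ WupJ R Pos J ∧ (pJ w)⁻¹ * w ∈ WsubJ R J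

/-- The product `s_i ⋯ s_1` of the first `i` members of a sequence in a group. -/
noncomputable def chainProd {G : Type*} [Group G] (s : ℕ → G) (i : ℕ) : G :=
  (((List.range' 1 i).map s).reverse).prod

/-- The chain `w^(0) = w`, `w^(i) = (s_i ⋯ s_1 w)^J` associated to `w` and a sequence
of simple reflections. -/
noncomputable def chainElt {G : Type*} [Group G] (pJ : G → G) (s : ℕ → G) (w : G)
    (i : ℕ) : G :=
  if i = 0 then w else pJ (chainProd s i * w)

/-- The partial order `<_J`:  `w <_J w'` iff there are simple reflections
`s_1, …, s_r` (`r ≥ 1`) such that, with `w^(i) = (s_i ⋯ s_1 w)^J`, the lengths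
`ℓ(w^(i))` are strictly increasing and `w^(r) = w'`.  Taking `pJ = id`
(and `J = ∅`) gives the weak left order `<_∅`. -/
noncomputable def ltJ {G : Type*} [Group G] (S : Set G) (ℓ : G → ℕ) (pJ : G → G)
    (w w' : G) : Prop :=
  ∃ r : ℕ, 1 ≤ r ∧ ∃ s : ℕ → G,
    (∀ m, 1 ≤ m → m ≤ r → s m ∈ S) ∧
    (∀ m, 1 ≤ m → m ≤ r → ℓ (chainElt pJ s w (m - 1)) < ℓ (chainElt pJ s w m)) ∧
    chainElt pJ s w r = w'

/-- `w` is the longest element of a subgroup `H` of `W` (with respect to `ℓ`). -/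
noncomputable def IsLongestIn (R : RootSystemData V) (Δ : Set V)
    (H : Subgroup (V ≃ₗ[ℝ] V)) (w : V ≃ₗ[ℝ] V) : Prop :=
  w ∈ H ∧ ∀ v ∈ H, len R Δ v ≤ len R Δ w

end PaperSp

namespace PaperSp

variable {V : Type} [AddCommGroup V] [Module ℝ V]

/-- The index type of the direct sum `⊕_{α ∈ Δ\J} L[W^{J∪{α}}]`. -/
noncomputable def MJdom (R : RootSystemData V) (Pos Δ J : Set V) : Type :=
  Σ a : ↥(Δ \ J), ↥(WupJ R Pos (J ∪ {(a : V)}))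

/-- The map `∂ : ⊕_{α ∈ Δ\J} L[W^{J∪{α}}] → L[W^J]` sending the basis element
`w ∈ W^{J∪{α}}` to the sum of all `w' ∈ W^J` with `w' W_J ⊆ w W_{J∪{α}}`. -/
noncomputable def MJd (R : RootSystemData V) (Pos Δ J : Set V)
    (L : Type) [CommRing L] :
    ((MJdom R Pos Δ J) →₀ L) →ₗ[L] ((↥(WupJ R Pos J)) →₀ L) :=
  Finsupp.lift _ L _ (fun x =>
    ∑ᶠ w' : ↥(WupJ R Pos J),
      if (↑w' : V ≃ₗ[ℝ] V) • ((WsubJ R J : Set (V ≃ₗ[ℝ] V)))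
          ⊆ (↑(x.2) : V ≃ₗ[ℝ] V) • ((WsubJ R (J ∪ {(x.1 : V)}) : Set (V ≃ₗ[ℝ] V)))
        then Finsupp.single w' (1 : L) else 0)

/-- The module `M_J(L)`:  the cokernel of `∂`. -/
noncomputable def MJmod (R : RootSystemData V) (Pos Δ J : Set V)
    (L : Type) [CommRing L] : Type :=
  ((↥(WupJ R Pos J)) →₀ L) ⧸ LinearMap.range (MJd R Pos Δ J L)

noncomputable instance (R : RootSystemData V) (Pos Δ J : Set V)
    (L : Type) [CommRing L] : AddCommGroup (MJmod R Pos Δ J L) :=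
  Submodule.Quotient.addCommGroup _

noncomputable instance (R : RootSystemData V) (Pos Δ J : Set V)
    (L : Type) [CommRing L] : Module L (MJmod R Pos Δ J L) :=
  Submodule.Quotient.module _

/-- The quotient map `∇ : L[W^J] → M_J(L)`. -/
noncomputable def MJnabla (R : RootSystemData V) (Pos Δ J : Set V)
    (L : Type) [CommRing L] :
    ((↥(WupJ R Pos J)) →₀ L) →ₗ[L] MJmod R Pos Δ J L :=
  Submodule.mkQ _

end PaperSp

namespace PaperSp

variable {V : Type} [AddCommGroup V] [Module ℝ V]

/-- The dual map `∂* : ℚ[W^J] → ⊕_{α ∈ Δ\J} ℚ[W^{J∪{α}}]` (with respect to the standard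
bases), sending `w' ∈ W^J` to the tuple whose `α`-component is the unique
`w ∈ W^{J∪{α}}` with `w W_{J∪{α}} = w' W_{J∪{α}}`. -/
noncomputable def MJdstar (R : RootSystemData V) (Pos Δ J : Set V) :
    ((↥(WupJ R Pos J)) →₀ ℚ) →ₗ[ℚ] ((MJdom R Pos Δ J) →₀ ℚ) :=
  Finsupp.lift _ ℚ _ (fun w' =>
    ∑ᶠ a : ↥(Δ \ J), ∑ᶠ w : ↥(WupJ R Pos (J ∪ {(a : V)})),
      if (↑w : V ≃ₗ[ℝ] V) • ((WsubJ R (J ∪ {(a : V)}) : Set (V ≃ₗ[ℝ] V)))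
          = (↑w' : V ≃ₗ[ℝ] V) • ((WsubJ R (J ∪ {(a : V)}) : Set (V ≃ₗ[ℝ] V)))
        then Finsupp.single (⟨a, w⟩ : MJdom R Pos Δ J) (1 : ℚ) else 0)

/-- The element `σ(w') = Σ_{v ∈ W_{Δ\J}} (−1)^{ℓ(v)} (w'v)^J ∈ ℚ[W^J]`. -/
noncomputable def sigmaVec (R : RootSystemData V) (Pos Δ J : Set V)
    (pJ : (V ≃ₗ[ℝ] V) → (V ≃ₗ[ℝ] V)) (w' : V ≃ₗ[ℝ] V) :
    (↥(WupJ R Pos J)) →₀ ℚ :=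
  ∑ᶠ v : ↥(WsubJ R (Δ \ J)), ∑ᶠ u : ↥(WupJ R Pos J),
    if (u : V ≃ₗ[ℝ] V) = pJ (w' * (v : V ≃ₗ[ℝ] V))
      then ((-1 : ℚ) ^ (len R Δ (v : V ≃ₗ[ℝ] V))) • Finsupp.single u (1 : ℚ) else 0


section Helpers

theorem refl_apply' (R : RootSystemData V) {α : V} (h : α ∈ R.Phi) (x : V) :
    R.refl α x = x - R.pairing α x • α := by
  simp [RootSystemData.refl, h, Module.reflection_apply]

theorem refl_refl (R : RootSystemData V) (α : V) (x : V) :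
    R.refl α (R.refl α x) = x := by
  unfold RootSystemData.refl
  split_ifs with h
  · exact Module.involutive_reflection _ x
  · rfl

theorem refl_mul_self (R : RootSystemData V) (α : V) : R.refl α * R.refl α = 1 := by
  ext x; exact refl_refl R α x

theorem refl_self (R : RootSystemData V) {α : V} (h : α ∈ R.Phi) :
    R.refl α α = -α := by
  rw [refl_apply' R h, R.pairing_self α h, two_smul]; abel

theorem neg_mem_Phi (R : RootSystemData V) {α : V} (h : α ∈ R.Phi) : -α ∈ R.Phi := by
  have := R.reflect_mem α h α h
  rwa [R.pairing_self α h, two_smul, show α - (α + α) = -α by abel] at this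

theorem weyl_mem_iff (R : RootSystemData V) {w : V ≃ₗ[ℝ] V} (hw : w ∈ weylGroup R) :
    ∀ β : V, w β ∈ R.Phi ↔ β ∈ R.Phi := by
  unfold weylGroup at hw
  induction hw using Subgroup.closure_induction with
  | mem x hx =>
    obtain ⟨α, hα, rfl⟩ := hx
    have key : ∀ β ∈ R.Phi, R.refl α β ∈ R.Phi := fun β hβ => by
      rw [refl_apply' R hα]; exact R.reflect_mem α hα β hβ
    intro β
    refine ⟨fun h => ?_, key β⟩
    have := key _ h
    rwa [refl_refl] at this
  | one => intro β; rfl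
  | mul x y _ _ hx hy => intro β; rw [LinearEquiv.mul_apply, hx, hy]
  | inv x _ hx =>
    intro β
    rw [← hx (x⁻¹ β), ← LinearEquiv.mul_apply, mul_inv_cancel]; rfl

theorem refl_mem_weyl (R : RootSystemData V) {α : V} (h : α ∈ R.Phi) :
    R.refl α ∈ weylGroup R := Subgroup.subset_closure ⟨α, h, rfl⟩

theorem conj_refl (R : RootSystemData V) {w : V ≃ₗ[ℝ] V} (hw : w ∈ weylGroup R)
    {α : V} (h : α ∈ R.Phi) : w * R.refl α = R.refl (w α) * w := by
  have hwα : w α ∈ R.Phi := (weyl_mem_iff R hw α).2 h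
  have e : R.pairing (w α) = (R.pairing α).comp (w.symm : V →ₗ[ℝ] V) := by
    refine Module.Dual.eq_of_preReflection_mapsTo (x := w α) R.finite R.span_top
      (R.pairing_self _ hwα) ?_ ?_ ?_
    · intro β hβ
      rw [Module.preReflection_apply]; exact R.reflect_mem _ hwα _ hβ
    · simp [R.pairing_self α h]
    · intro β hβ
      rw [Module.preReflection_apply]
      have h1 : w.symm β ∈ R.Phi := by
        rw [← weyl_mem_iff R hw]; simpa using hβ
      have h2 := (weyl_mem_iff R hw _).2 (R.reflect_mem α h _ h1)
      simpa using h2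
  ext x
  rw [LinearEquiv.mul_apply, LinearEquiv.mul_apply, refl_apply' R h, refl_apply' R hwα, e]
  simp

theorem weyl_finite (R : RootSystemData V) : (weylGroup R : Set (V ≃ₗ[ℝ] V)).Finite := by
  have : Finite R.Phi := R.finite
  let f : weylGroup R → (R.Phi → R.Phi) := fun w β =>
    ⟨(w : V ≃ₗ[ℝ] V) β, (weyl_mem_iff R w.2 _).2 β.2⟩
  have hf : Function.Injective f := by
    intro w w' h
    apply Subtype.ext
    apply LinearEquiv.toLinearMap_injective
    refine LinearMap.ext_on R.span_top ?_
    intro β hβ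
    exact congrArg Subtype.val (congrFun h ⟨β, hβ⟩)
  exact (Finite.of_injective f hf : Finite (weylGroup R))

theorem Wsub_le (R : RootSystemData V) {K : Set V} (hK : K ⊆ R.Phi) :
    WsubJ R K ≤ weylGroup R := by
  apply Subgroup.closure_mono
  rintro _ ⟨α, hα, rfl⟩
  exact ⟨α, hK hα, rfl⟩

theorem Wsub_mono (R : RootSystemData V) {K K' : Set V} (hK : K ⊆ K') :
    WsubJ R K ≤ WsubJ R K' := by
  apply Subgroup.closure_mono
  rintro _ ⟨α, hα, rfl⟩
  exact ⟨α, hK hα, rfl⟩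

theorem base_phi {R : RootSystemData V} {Pos Δ : Set V} (h : IsBase R Pos Δ) : Δ ⊆ R.Phi :=
  h.delta_sub.trans h.pos_sub

theorem base_span {R : RootSystemData V} {Pos Δ : Set V} (h : IsBase R Pos Δ) :
    ⊤ ≤ Submodule.span ℝ (Set.range (fun a : Δ => (a : V))) := by
  rw [← R.span_top, Submodule.span_le, Subtype.range_coe]
  have key : ∀ β ∈ Pos, β ∈ Submodule.span ℝ Δ := by
    intro β hβ
    obtain ⟨c, hc, rfl⟩ := h.decomp β hβ
    exact Submodule.sum_mem _ fun a ha =>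
      Submodule.smul_mem _ _ (Submodule.subset_span (hc ha))
  intro β hβ
  rcases h.mem_or_neg β hβ with h1 | h1
  · exact key β h1
  · have := Submodule.neg_mem _ (key _ h1)
    simpa using this

noncomputable def bb {R : RootSystemData V} {Pos Δ : Set V} (h : IsBase R Pos Δ) :
    Module.Basis Δ ℝ V := Module.Basis.mk h.indep (base_span h)

variable {R : RootSystemData V} {Pos Δ : Set V} (h : IsBase R Pos Δ)

theorem bb_apply (a : Δ) : bb h a = (a : V) := by simp [bb]

theorem bb_coeff {β : V} (hβ : β ∈ Δ) (d : Δ) :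
    (bb h).repr β d = if β = d then 1 else 0 := by
  have : (bb h).repr β = Finsupp.single ⟨β, hβ⟩ 1 := by
    rw [← (bb h).repr_self, bb_apply]
  rw [this, Finsupp.single_apply]
  simp [Subtype.ext_iff]

theorem coeff_nonneg {β : V} (hβ : β ∈ Pos) (d : Δ) : 0 ≤ (bb h).repr β d := by
  obtain ⟨c, hc, rfl⟩ := h.decomp β hβ
  rw [Finsupp.sum, map_sum, Finsupp.finsetSum_apply]
  refine Finset.sum_nonneg fun a ha => ?_
  rw [map_smul, Finsupp.smul_apply, bb_coeff h (hc ha)]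
  split_ifs <;> simp

theorem pos_ne_zero {β : V} (hβ : β ∈ R.Phi) : β ≠ 0 := by
  rintro rfl; exact R.zero_not_mem hβ

theorem exists_coeff {β : V} (hβ : β ∈ Pos) : ∃ d : Δ, 0 < (bb h).repr β d := by
  by_contra hn
  push Not at hn
  apply pos_ne_zero (h.pos_sub hβ)
  apply (bb h).repr.injective
  ext d
  simpa using le_antisymm (hn d) (coeff_nonneg h hβ d)

theorem pos_of_coeff {β : V} (hβ : β ∈ R.Phi) (d : Δ) (hd : 0 < (bb h).repr β d) :
    β ∈ Pos := by
  rcases h.mem_or_neg β hβ with h1 | h1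
  · exact h1
  · have := coeff_nonneg h h1 d
    simp at this; linarith

theorem neg_mem_pos (h : IsBase R Pos Δ) {β : V} (hβ : β ∈ R.Phi) (hn : β ∉ Pos) : -β ∈ Pos :=
  (h.mem_or_neg β hβ).resolve_left hn

theorem coeff_inv {K : Set V} (hK : K ⊆ Δ) {v : V ≃ₗ[ℝ] V} (hv : v ∈ WsubJ R K) (d : Δ)
    (hd : (d : V) ∉ K) : ∀ x : V, (bb h).repr (v x) d = (bb h).repr x d := by
  unfold WsubJ at hv
  induction hv using Subgroup.closure_induction with
  | mem s hs =>
    obtain ⟨α, hα, rfl⟩ := hs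
    intro x
    rw [refl_apply' R (base_phi h (hK hα)), map_sub, map_smul, Finsupp.sub_apply,
      Finsupp.smul_apply, bb_coeff h (hK hα), if_neg]
    · simp
    · rintro rfl; exact hd hα
  | one => intro x; rfl
  | mul x y _ _ hx hy => intro β; rw [LinearEquiv.mul_apply, hx, hy]
  | inv x _ hx =>
    intro β
    rw [← hx (x⁻¹ β), ← LinearEquiv.mul_apply, mul_inv_cancel]; rfl

def InSpan (K : Set V) (β : V) : Prop := ∀ d : Δ, (d : V) ∉ K → (bb h).repr β d = 0

theorem inSpan_iff {K : Set V} (hK : K ⊆ Δ) {v : V ≃ₗ[ℝ] V} (hv : v ∈ WsubJ R K) (β : V) :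
    InSpan h K (v β) ↔ InSpan h K β := by
  unfold InSpan
  refine forall_congr' fun d => forall_congr' fun hd => ?_
  rw [coeff_inv h hK hv d hd]

theorem inSpan_neg {K : Set V} {β : V} (hβ : InSpan h K β) : InSpan h K (-β) := by
  intro d hd; simp [hβ d hd]

theorem pos_of_not_inSpan {K : Set V} (hK : K ⊆ Δ) {v : V ≃ₗ[ℝ] V} (hv : v ∈ WsubJ R K)
    {β : V} (hβ : β ∈ Pos) (hn : ¬ InSpan h K β) : v β ∈ Pos := by
  unfold InSpan at hn
  push Not at hn
  obtain ⟨d, hd, h0⟩ := hn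
  refine pos_of_coeff h ((weyl_mem_iff R (Wsub_le R (hK.trans (base_phi h)) hv) _).2
    (h.pos_sub hβ)) d ?_
  rw [coeff_inv h hK hv d hd]
  exact lt_of_le_of_ne (coeff_nonneg h hβ d) (Ne.symm h0)

theorem coeff_map (w : V ≃ₗ[ℝ] V) (β : V) (e : Δ) :
    (bb h).repr (w β) e = ((bb h).repr β).sum fun d c => c * (bb h).repr (w (d : V)) e := by
  conv_lhs => rw [← (bb h).linearCombination_repr β]
  rw [Finsupp.linearCombination_apply, Finsupp.sum, map_sum, map_sum,
    Finsupp.finsetSum_apply]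
  simp [Finsupp.sum, bb_apply]

theorem cone_pos {K : Set V} {w : V ≃ₗ[ℝ] V} (hw : w ∈ weylGroup R)
    (hp : ∀ α ∈ K, w α ∈ Pos) {β : V} (hβ : β ∈ Pos) (hs : InSpan h K β) : w β ∈ Pos := by
  by_contra hn
  have hn' := neg_mem_pos h ((weyl_mem_iff R hw _).2 (h.pos_sub hβ)) hn
  obtain ⟨e, he⟩ := exists_coeff h hn'
  have : 0 ≤ (bb h).repr (w β) e := by
    rw [coeff_map]
    refine Finset.sum_nonneg fun d hd => mul_nonneg (coeff_nonneg h hβ d) ?_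
    refine coeff_nonneg h (hp _ ?_) e
    by_contra hdK
    exact (Finsupp.mem_support_iff.1 hd) (hs d hdK)
  simp at he; linarith

theorem cone_neg {K : Set V} (hK : K ⊆ Δ) {w : V ≃ₗ[ℝ] V} (hw : w ∈ weylGroup R)
    (hp : ∀ α ∈ K, w α ∉ Pos) {β : V} (hβ : β ∈ Pos) (hs : InSpan h K β) : w β ∉ Pos := by
  intro hn
  obtain ⟨e, he⟩ := exists_coeff h hn
  have : (bb h).repr (w β) e ≤ 0 := by
    rw [coeff_map]
    refine Finset.sum_nonpos fun d hd => mul_nonpos_of_nonneg_of_nonpos (coeff_nonneg h hβ d) ?_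
    have hdK : (d : V) ∈ K := by
      by_contra hdK
      exact (Finsupp.mem_support_iff.1 hd) (hs d hdK)
    have := coeff_nonneg h (neg_mem_pos h ((weyl_mem_iff R hw _).2 (base_phi h d.2)) (hp _ hdK)) e
    simpa using this
  linarith

theorem simple_perm (h : IsBase R Pos Δ) {α : V} (hα : α ∈ Δ) {β : V} (hβ : β ∈ Pos)
    (hn : R.refl α β ∉ Pos) : β = α := by
  have hK : ({α} : Set V) ⊆ Δ := by simpa using hα
  have hv : R.refl α ∈ WsubJ R {α} := Subgroup.subset_closure ⟨α, rfl, rfl⟩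
  have hs : InSpan h {α} β := by
    by_contra hc
    exact hn (pos_of_not_inSpan h hK hv hβ hc)
  have e : β = (bb h).repr β ⟨α, hα⟩ • α := by
    apply (bb h).repr.injective
    ext d
    rw [map_smul, Finsupp.smul_apply, bb_coeff h hα]
    by_cases hd : α = d
    · have : d = ⟨α, hα⟩ := Subtype.ext hd.symm
      subst this; simp
    · rw [hs d (fun h' => hd (by simpa using h'.symm))]; simp [hd]
  have h0 := coeff_nonneg h hβ ⟨α, hα⟩
  have hm : (bb h).repr β ⟨α, hα⟩ • α ∈ R.Phi := e ▸ h.pos_sub hβ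
  rcases R.reduced α (base_phi h hα) _ hm with h1 | h1
  · rw [e, h1, one_smul]
  · linarith

theorem exchange (h : IsBase R Pos Δ) {α : V} (hα : α ∈ Δ) : ∀ l : List V, (∀ x ∈ l, x ∈ Δ) →
    (l.map R.refl).prod α ∉ Pos →
    ∃ l' : List V, (∀ x ∈ l', x ∈ Δ) ∧ l'.length < l.length ∧
      (l'.map R.refl).prod = (l.map R.refl).prod * R.refl α
  | [], _, hn => absurd (h.delta_sub hα) (by simpa using hn)
  | a :: l, hl, hn => by
    have ha : a ∈ Δ := hl a (by simp)
    have hl' : ∀ x ∈ l, x ∈ Δ := fun x hx => hl x (by simp [hx])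
    have hx : (l.map R.refl).prod ∈ weylGroup R := by
      refine Subgroup.list_prod_mem _ ?_
      intro y hy
      obtain ⟨c, hc, rfl⟩ := List.mem_map.1 hy
      exact refl_mem_weyl R (base_phi h (hl' c hc))
    by_cases hp : (l.map R.refl).prod α ∈ Pos
    · refine ⟨l, hl', by simp, ?_⟩
      have := simple_perm h ha hp (by simpa using hn)
      rw [List.map_cons, List.prod_cons, mul_assoc, conj_refl R hx (base_phi h hα), this,
        ← mul_assoc, refl_mul_self, one_mul]
    · obtain ⟨l', h1, h2, h3⟩ := exchange h hα l hl' hp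
      refine ⟨a :: l', ?_, by simpa using h2, ?_⟩
      · intro x hx
        rcases List.mem_cons.1 hx with rfl | hx
        · exact ha
        · exact h1 x hx
      · simp [h3, mul_assoc]

theorem word_eq_one (h : IsBase R Pos Δ) : ∀ (n : ℕ) (l : List V), l.length = n → (∀ x ∈ l, x ∈ Δ) →
    (∀ β ∈ Pos, (l.map R.refl).prod β ∈ Pos) → (l.map R.refl).prod = 1 := by
  intro n
  induction n using Nat.strong_induction_on with
  | _ n ih =>
  intro l hn hl hp
  rcases List.eq_nil_or_concat l with rfl | ⟨l0, α, rfl⟩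
  · rfl
  · have hα : α ∈ Δ := hl α (by simp)
    have hl0 : ∀ x ∈ l0, x ∈ Δ := fun x hx => hl x (by simp [hx])
    have e : ((l0 ++ [α]).map R.refl).prod = (l0.map R.refl).prod * R.refl α := by simp
    have hneg : (l0.map R.refl).prod α ∉ Pos := by
      intro hc
      have h1 := hp α (h.delta_sub hα)
      rw [List.concat_eq_append, e, LinearEquiv.mul_apply, refl_self R (base_phi h hα), map_neg] at h1
      exact h.not_both _ ⟨hc, h1⟩
    obtain ⟨l', h1, h2, h3⟩ := exchange h hα l0 hl0 hneg
    rw [List.concat_eq_append, e, ← h3] at hp ⊢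
    exact ih l'.length (by simp at hn; omega) l' rfl h1 hp

theorem exists_word {K : Set V} {v : V ≃ₗ[ℝ] V} (hv : v ∈ WsubJ R K) :
    ∃ l : List V, (∀ x ∈ l, x ∈ K) ∧ (l.map R.refl).prod = v := by
  unfold WsubJ at hv
  induction hv using Subgroup.closure_induction with
  | mem s hs => obtain ⟨α, hα, rfl⟩ := hs; exact ⟨[α], by simpa using hα, by simp⟩
  | one => exact ⟨[], by simp, rfl⟩
  | mul x y _ _ hx hy =>
    obtain ⟨l, h1, rfl⟩ := hx
    obtain ⟨m, h2, rfl⟩ := hy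
    refine ⟨l ++ m, ?_, by simp⟩
    intro x hx
    rcases List.mem_append.1 hx with hx | hx
    · exact h1 x hx
    · exact h2 x hx
  | inv x _ hx =>
    obtain ⟨l, h1, rfl⟩ := hx
    refine ⟨l.reverse, by simpa using h1, ?_⟩
    rw [List.prod_inv_reverse, List.map_map, List.map_reverse]
    congr 2
    apply List.map_congr_left
    intro a _
    exact (inv_eq_of_mul_eq_one_left (refl_mul_self R a)).symm

theorem exists_neg (h : IsBase R Pos Δ) {K : Set V} (hK : K ⊆ Δ) {v : V ≃ₗ[ℝ] V} (hv : v ∈ WsubJ R K)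
    (h1 : v ≠ 1) : ∃ β ∈ Pos, v β ∉ Pos := by
  by_contra hn
  push Not at hn
  obtain ⟨l, hl, rfl⟩ := exists_word hv
  exact h1 (word_eq_one h _ l rfl (fun x hx => hK (hl x hx)) hn)

noncomputable def NN (Pos : Set V) (w : V ≃ₗ[ℝ] V) : ℕ := {β | β ∈ Pos ∧ w β ∉ Pos}.ncard

theorem NN_fin (h : IsBase R Pos Δ) (w : V ≃ₗ[ℝ] V) : {β | β ∈ Pos ∧ w β ∉ Pos}.Finite :=
  R.finite.subset fun _ hβ => h.pos_sub hβ.1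

theorem NN_le (h : IsBase R Pos Δ) {K : Set V} (hK : K ⊆ Δ) {u v : V ≃ₗ[ℝ] V}
    (hu : u ∈ weylGroup R) (hv : v ∈ WsubJ R K) (hp : ∀ α ∈ K, u α ∈ Pos) :
    NN Pos u ≤ NN Pos (u * v) := by
  refine Set.ncard_le_ncard_of_injOn (fun β => v⁻¹ β) ?_ (v⁻¹).injective.injOn (NN_fin h _)
  rintro β ⟨hβ, hn⟩
  have hns : ¬ InSpan h K β := fun hs => hn (cone_pos h hu hp hβ hs)
  refine ⟨pos_of_not_inSpan h hK (inv_mem hv) hβ hns, ?_⟩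
  rw [← LinearEquiv.mul_apply, mul_inv_cancel_right]
  exact hn

theorem NN_lt (h : IsBase R Pos Δ) {K : Set V} (hK : K ⊆ Δ) {u v : V ≃ₗ[ℝ] V}
    (hu : u ∈ weylGroup R) (hv : v ∈ WsubJ R K) (hp : ∀ α ∈ K, u α ∉ Pos) (h1 : v ≠ 1) :
    NN Pos (u * v) < NN Pos u := by
  obtain ⟨β₀, hβ₀, hvβ₀⟩ := exists_neg h hK hv h1
  have hvW := Wsub_le R (hK.trans (base_phi h)) hv
  have hs₀ : InSpan h K β₀ := by
    by_contra hc; exact hvβ₀ (pos_of_not_inSpan h hK hv hβ₀ hc)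
  have hroot : v β₀ ∈ R.Phi := (weyl_mem_iff R hvW _).2 (h.pos_sub hβ₀)
  have huv : u (v β₀) ∈ Pos := by
    have h2 := cone_neg h hK hu hp (neg_mem_pos h hroot hvβ₀)
      (inSpan_neg h ((inSpan_iff h hK hv _).2 hs₀))
    have h3 := neg_mem_pos h ((weyl_mem_iff R hu _).2 (neg_mem_Phi R hroot)) h2
    simpa using h3
  let f : V → V := fun β => if InSpan h K β then β else v β
  have hf : Set.InjOn f {β | β ∈ Pos ∧ (u * v) β ∉ Pos} := by
    intro x _ y _ hxy
    simp only [f] at hxy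
    split_ifs at hxy with hx hy hy
    · exact hxy
    · subst hxy; exact absurd ((inSpan_iff h hK hv _).1 hx) hy
    · subst hxy; exact absurd ((inSpan_iff h hK hv _).1 hy) hx
    · exact v.injective hxy
  unfold NN
  rw [← hf.ncard_image]
  refine Set.ncard_lt_ncard ?_ (NN_fin h _)
  rw [Set.ssubset_iff_of_subset]
  · refine ⟨β₀, ⟨hβ₀, cone_neg h hK hu hp hβ₀ hs₀⟩, ?_⟩
    rintro ⟨x, ⟨hx, hx'⟩, hxe⟩
    simp only [f] at hxe
    split_ifs at hxe with hs
    · subst hxe; exact hx' huv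
    · subst hxe; exact hs ((inSpan_iff h hK hv _).1 hs₀)
  · rintro _ ⟨x, ⟨hx, hx'⟩, rfl⟩
    simp only [f]
    split_ifs with hs
    · exact ⟨hx, cone_neg h hK hu hp hx hs⟩
    · exact ⟨pos_of_not_inSpan h hK hv hx hs, hx'⟩

theorem min_unique (h : IsBase R Pos Δ) {K : Set V} (hK : K ⊆ Δ) {u u' : V ≃ₗ[ℝ] V}
    (hu : u ∈ WupJ R Pos K) (hu' : u' ∈ WupJ R Pos K) (hv : u⁻¹ * u' ∈ WsubJ R K) :
    u = u' := by
  by_contra hne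
  obtain ⟨β, hβ, hvβ⟩ := exists_neg h hK hv (fun hc => hne (inv_mul_eq_one.1 hc))
  have hvW := Wsub_le R (hK.trans (base_phi h)) hv
  have hs : InSpan h K β := by
    by_contra hc; exact hvβ (pos_of_not_inSpan h hK hv hβ hc)
  have hroot := (weyl_mem_iff R hvW β).2 (h.pos_sub hβ)
  have h2 := cone_pos h hu.1 hu.2 (neg_mem_pos h hroot hvβ)
      (inSpan_neg h ((inSpan_iff h hK hv _).2 hs))
  rw [map_neg, ← LinearEquiv.mul_apply, mul_inv_cancel_left] at h2
  exact h.not_both _ ⟨cone_pos h hu'.1 hu'.2 hβ hs, h2⟩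

theorem V_fin (h : IsBase R Pos Δ) : Module.Finite ℝ V := by
  have : Finite Δ := R.finite.subset (base_phi h)
  exact Module.Finite.of_basis (bb h)

theorem det_refl (h : IsBase R Pos Δ) {α : V} (hα : α ∈ R.Phi) :
    LinearMap.det (R.refl α : V →ₗ[ℝ] V) = -1 := by
  have := V_fin h
  have e : (R.refl α : V →ₗ[ℝ] V) = LinearMap.transvection (-R.pairing α) α := by
    ext x
    simp [refl_apply' R hα, LinearMap.transvection.apply, sub_eq_add_neg]
  rw [e, LinearMap.transvection.det]
  simp [R.pairing_self α hα]; norm_num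

theorem det_mul' (v w : V ≃ₗ[ℝ] V) : LinearMap.det ((v * w : V ≃ₗ[ℝ] V) : V →ₗ[ℝ] V) =
    LinearMap.det (v : V →ₗ[ℝ] V) * LinearMap.det (w : V →ₗ[ℝ] V) := by
  rw [← LinearMap.det_comp]; rfl

theorem det_word (h : IsBase R Pos Δ) : ∀ l : List (V ≃ₗ[ℝ] V), (∀ x ∈ l, x ∈ refls R Δ) →
    LinearMap.det (l.prod : V →ₗ[ℝ] V) = (-1) ^ l.length
  | [], _ => by
    have : ((List.prod [] : V ≃ₗ[ℝ] V) : V →ₗ[ℝ] V) = LinearMap.id := rfl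
    rw [this, LinearMap.det_id]; simp
  | a :: l, hl => by
    obtain ⟨α, hα, rfl⟩ := hl a (by simp)
    rw [List.prod_cons, det_mul', det_refl h (base_phi h hα),
      det_word h l (fun x hx => hl x (by simp [hx]))]
    simp [pow_succ]

theorem len_det (h : IsBase R Pos Δ) {K : Set V} (hK : K ⊆ Δ) {v : V ≃ₗ[ℝ] V}
    (hv : v ∈ WsubJ R K) : ((-1 : ℝ)) ^ len R Δ v = LinearMap.det (v : V →ₗ[ℝ] V) := by
  obtain ⟨l, hl, e⟩ := exists_word hv
  have hne : {n | ∃ ls : List (V ≃ₗ[ℝ] V), ls.length = n ∧ (∀ x ∈ ls, x ∈ refls R Δ) ∧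
      ls.prod = v}.Nonempty := by
    refine ⟨_, l.map R.refl, rfl, ?_, e⟩
    intro x hx
    obtain ⟨a, ha, rfl⟩ := List.mem_map.1 hx
    exact ⟨a, hK (hl a ha), rfl⟩
  obtain ⟨ls, h1, h2, h3⟩ := Nat.sInf_mem hne
  rw [← h3, det_word h ls h2, h1, h3]; rfl

theorem sgn_mul (h : IsBase R Pos Δ) {K : Set V} (hK : K ⊆ Δ) {v : V ≃ₗ[ℝ] V}
    (hv : v ∈ WsubJ R K) {α : V} (hα : α ∈ K) :
    (-1 : ℚ) ^ len R Δ (v * R.refl α) = - (-1 : ℚ) ^ len R Δ v := by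
  have hs : R.refl α ∈ WsubJ R K := Subgroup.subset_closure ⟨α, hα, rfl⟩
  have h1 := len_det h hK (mul_mem hv hs)
  rw [det_mul', det_refl h (base_phi h (hK hα)), ← len_det h hK hv] at h1
  have : (((-1 : ℚ) ^ len R Δ (v * R.refl α) : ℚ) : ℝ) = ((- (-1 : ℚ) ^ len R Δ v : ℚ) : ℝ) := by
    push_cast; rw [h1]; ring
  exact_mod_cast this

theorem len_one : len R Δ 1 = 0 := by
  unfold len lengthWrt
  exact Nat.sInf_eq_zero.2 (Or.inl ⟨[], rfl, by simp, rfl⟩)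

theorem triang {ι M : Type*} [AddCommGroup M] [Module ℚ M] (N : ι → ℕ)
    (f : ι → M) (e : ι → M →ₗ[ℚ] ℚ) (h1 : ∀ i, e i (f i) ≠ 0)
    (h2 : ∀ i j, e i (f j) ≠ 0 → j = i ∨ N i < N j) : LinearIndependent ℚ f := by
  rw [linearIndependent_iff']
  intro s g hg
  by_contra hn
  push Not at hn
  obtain ⟨i₀, hi₀, hg₀⟩ := hn
  obtain ⟨i, hi, hmax⟩ := Finset.exists_max_image (s.filter fun i => g i ≠ 0) N
    ⟨i₀, by simp [hi₀, hg₀]⟩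
  rw [Finset.mem_filter] at hi
  have h3 := congrArg (e i) hg
  rw [map_sum, map_zero, Finset.sum_eq_single i] at h3
  · rw [map_smul, smul_eq_mul] at h3
    exact (mul_ne_zero hi.2 (h1 i)) h3
  · intro j hj hji
    rw [map_smul, smul_eq_mul]
    by_contra hc
    have hgj := left_ne_zero_of_mul hc
    rcases h2 i j (right_ne_zero_of_mul hc) with h4 | h4
    · exact hji h4
    · exact absurd (hmax j (by simp [hj, hgj])) (not_le.2 h4)
  · intro hc; exact absurd hi.1 hc

variable {J : Set V} {pJ : (V ≃ₗ[ℝ] V) → (V ≃ₗ[ℝ] V)}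

theorem Wsub_finite (h : IsBase R Pos Δ) {K : Set V} (hK : K ⊆ Δ) : Finite (WsubJ R K) :=
  (weyl_finite R).subset (Wsub_le R (hK.trans (base_phi h)))

theorem Wup_finite (R : RootSystemData V) (Pos K : Set V) : Finite (WupJ R Pos K) :=
  (weyl_finite R).subset (fun _ hx => hx.1)

theorem mulW (h : IsBase R Pos Δ) {w : V ≃ₗ[ℝ] V} (hw : w ∈ weylGroup R)
    (v : WsubJ R (Δ \ J)) : w * (v : V ≃ₗ[ℝ] V) ∈ weylGroup R :=
  mul_mem hw (Wsub_le R (Set.sdiff_subset.trans (base_phi h)) v.2)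

/-- the element `(w v)^J` -/
noncomputable def ppr (h : IsBase R Pos Δ) (hpJ : IsProjJ R Pos J pJ) {w : V ≃ₗ[ℝ] V}
    (hw : w ∈ weylGroup R) (v : WsubJ R (Δ \ J)) : WupJ R Pos J :=
  ⟨pJ (w * v), (hpJ _ (mulW h hw v)).1⟩

theorem sigma_eq [Fintype (WsubJ R (Δ \ J))] (h : IsBase R Pos Δ) (hpJ : IsProjJ R Pos J pJ)
    {w : V ≃ₗ[ℝ] V} (hw : w ∈ weylGroup R) :
    sigmaVec R Pos Δ J pJ w = ∑ v : WsubJ R (Δ \ J),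
      ((-1 : ℚ) ^ len R Δ (v : V ≃ₗ[ℝ] V)) • Finsupp.single (ppr h hpJ hw v) (1 : ℚ) := by
  unfold sigmaVec
  rw [finsum_eq_sum_of_fintype]
  refine Finset.sum_congr rfl fun v _ => ?_
  rw [finsum_eq_single _ (ppr h hpJ hw v)]
  · exact if_pos rfl
  · intro u hu
    rw [if_neg]
    intro hc
    exact hu (Subtype.ext hc)

theorem cancel [Fintype (WsubJ R (Δ \ J))] {M : Type*} [AddCommGroup M] [Module ℚ M]
    (h : IsBase R Pos Δ) (hpJ : IsProjJ R Pos J pJ)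
    {w : V ≃ₗ[ℝ] V} (hw : w ∈ weylGroup R) {a : V} (ha : a ∈ Δ \ J)
    (F : WupJ R Pos J → M)
    (hF : ∀ u u' : WupJ R Pos J, (u : V ≃ₗ[ℝ] V)⁻¹ * u' ∈ WsubJ R (J ∪ {a}) → F u = F u') :
    ∑ v : WsubJ R (Δ \ J), ((-1 : ℚ) ^ len R Δ (v : V ≃ₗ[ℝ] V)) • F (ppr h hpJ hw v) = 0 := by
  have hs : R.refl a ∈ WsubJ R (Δ \ J) := Subgroup.subset_closure ⟨a, ha, rfl⟩
  have hs' : R.refl a ∈ WsubJ R (J ∪ {a}) := Subgroup.subset_closure ⟨a, by simp, rfl⟩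
  suffices hS : ∑ v : WsubJ R (Δ \ J), ((-1 : ℚ) ^ len R Δ (v : V ≃ₗ[ℝ] V)) • F (ppr h hpJ hw v) =
      -∑ v : WsubJ R (Δ \ J), ((-1 : ℚ) ^ len R Δ (v : V ≃ₗ[ℝ] V)) • F (ppr h hpJ hw v) by
    have h2 := add_eq_zero_iff_eq_neg.2 hS
    rw [← two_smul ℚ] at h2
    exact (smul_eq_zero.1 h2).resolve_left two_ne_zero
  rw [← Finset.sum_neg_distrib]
  refine Fintype.sum_equiv (Equiv.mulRight ⟨R.refl a, hs⟩) _ _ fun v => ?_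
  have e : F (ppr h hpJ hw v) = F (ppr h hpJ hw (v * ⟨R.refl a, hs⟩)) := by
    apply hF
    have h1 := Wsub_mono R (Set.subset_union_left (s := J) (t := {a})) (hpJ _ (mulW h hw v)).2
    have h2 := Wsub_mono R (Set.subset_union_left (s := J) (t := {a}))
      (hpJ _ (mulW h hw (v * ⟨R.refl a, hs⟩))).2
    have h3 := mul_mem (mul_mem h1 hs') (inv_mem h2)
    convert h3 using 1
    simp only [ppr, Subgroup.coe_mul]
    group
  rw [e, Equiv.coe_mulRight, Subgroup.coe_mul, sgn_mul h Set.sdiff_subset v.2 ha, neg_smul, neg_neg]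

theorem coset_eq {G : Type*} [Group G] (H : Subgroup G) {u u' : G} (hu : u⁻¹ * u' ∈ H) :
    u • (H : Set G) = u' • (H : Set G) := by
  exact (leftCoset_eq_iff H).2 hu

theorem ker_part (h : IsBase R Pos Δ) (_hJ : J ⊆ Δ) (hpJ : IsProjJ R Pos J pJ)
    {w : V ≃ₗ[ℝ] V} (hw : w ∈ weylGroup R) :
    MJdstar R Pos Δ J (sigmaVec R Pos Δ J pJ w) = 0 := by
  have := Wsub_finite h (K := Δ \ J) Set.sdiff_subset
  have := Fintype.ofFinite (WsubJ R (Δ \ J))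
  have : Finite ↥(Δ \ J) := R.finite.subset (Set.sdiff_subset.trans (base_phi h))
  have := Fintype.ofFinite ↥(Δ \ J)
  let D : ↥(Δ \ J) → WupJ R Pos J → (MJdom R Pos Δ J →₀ ℚ) := fun a w' =>
    ∑ᶠ w : ↥(WupJ R Pos (J ∪ {(a : V)})),
      if (↑w : V ≃ₗ[ℝ] V) • ((WsubJ R (J ∪ {(a : V)}) : Set (V ≃ₗ[ℝ] V)))
          = (↑w' : V ≃ₗ[ℝ] V) • ((WsubJ R (J ∪ {(a : V)}) : Set (V ≃ₗ[ℝ] V)))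
        then Finsupp.single (⟨a, w⟩ : MJdom R Pos Δ J) (1 : ℚ) else 0
  have hD : ∀ u : WupJ R Pos J, MJdstar R Pos Δ J (Finsupp.single u 1) = ∑ a, D a u := by
    intro u
    rw [← finsum_eq_sum_of_fintype]
    have : MJdstar R Pos Δ J = Finsupp.lift _ ℚ _ (fun w' => ∑ᶠ a, D a w') := rfl
    rw [this, Finsupp.lift_apply, Finsupp.sum_single_index (by simp), one_smul]
  rw [sigma_eq h hpJ hw, map_sum]
  simp only [map_smul, hD, Finset.smul_sum]
  rw [Finset.sum_comm]
  refine Finset.sum_eq_zero fun a _ => ?_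
  refine cancel h hpJ hw a.2 (D a) ?_
  intro u u' huu
  simp only [D, coset_eq _ huu]

theorem subset_iff' {G : Type*} [Group G] (H H' : Subgroup G) (hH : H ≤ H') (u x : G) :
    u • (H : Set G) ⊆ x • (H' : Set G) ↔ x⁻¹ * u ∈ H' := by
  constructor
  · intro hs
    have : u ∈ x • (H' : Set G) := hs ⟨1, H.one_mem, by simp⟩
    rwa [Set.mem_smul_set_iff_inv_smul_mem] at this
  · rintro hm _ ⟨y, hy, rfl⟩
    rw [Set.mem_smul_set_iff_inv_smul_mem]
    have := mul_mem hm (hH hy)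
    rwa [mul_assoc] at this

theorem phi_part (h : IsBase R Pos Δ) (_hJ : J ⊆ Δ) (hpJ : IsProjJ R Pos J pJ)
    {w : V ≃ₗ[ℝ] V} (hw : w ∈ weylGroup R) :
    LinearMap.range (MJd R Pos Δ J ℚ) ≤
      LinearMap.ker (Finsupp.linearCombination ℚ (sigmaVec R Pos Δ J pJ w : WupJ R Pos J → ℚ)) := by
  have := Wsub_finite h (K := Δ \ J) Set.sdiff_subset
  have := Fintype.ofFinite (WsubJ R (Δ \ J))
  have := Wup_finite R Pos J
  have := Fintype.ofFinite (WupJ R Pos J)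
  rw [LinearMap.range_le_ker_iff]
  refine Finsupp.lhom_ext' fun x => LinearMap.ext_ring ?_
  let F : WupJ R Pos J → ℚ := fun u =>
    if (u : V ≃ₗ[ℝ] V) • ((WsubJ R J : Set (V ≃ₗ[ℝ] V)))
          ⊆ (↑(x.2) : V ≃ₗ[ℝ] V) • ((WsubJ R (J ∪ {(x.1 : V)}) : Set (V ≃ₗ[ℝ] V))) then 1 else 0
  have hmono := Wsub_mono R (Set.subset_union_left (s := J) (t := {(x.1 : V)}))
  have hc := cancel h hpJ hw x.1.2 F (by
    intro u u' huu
    simp only [F, subset_iff' _ _ hmono]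
    congr 1
    rw [eq_iff_iff]
    constructor
    · intro h1; have := mul_mem h1 huu; simpa [mul_assoc] using this
    · intro h1; have := mul_mem h1 (inv_mem huu); simpa [mul_assoc] using this)
  have h1 : Finsupp.linearCombination ℚ F (sigmaVec R Pos Δ J pJ w) = 0 := by
    rw [sigma_eq h hpJ hw, map_sum, ← hc]
    simp
  simp only [LinearMap.comp_apply, LinearMap.zero_apply, Finsupp.lsingle_apply]
  unfold MJd
  simp only [Finsupp.lift_apply, Finsupp.sum_single_index, zero_smul, one_smul]
  rw [finsum_eq_sum_of_fintype, map_sum, ← h1, Finsupp.linearCombination_apply,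
    Finsupp.sum_fintype _ _ (by simp)]
  refine Finset.sum_congr rfl fun u _ => ?_
  simp only [F]
  split_ifs <;> simp

theorem V_neg {w : V ≃ₗ[ℝ] V} (hw : w ∈ VupJ R Pos Δ J) :
    ∀ α ∈ Δ \ J, w α ∉ Pos := by
  intro α hα hp
  refine hw.2 α hα.1 hα.2 ⟨hw.1.1, ?_⟩
  rintro β (hβ | hβ)
  · exact hw.1.2 β hβ
  · rw [Set.mem_singleton_iff.1 hβ]; exact hp

theorem proj_self (h : IsBase R Pos Δ) (hJ : J ⊆ Δ) (hpJ : IsProjJ R Pos J pJ)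
    {w : V ≃ₗ[ℝ] V} (hw : w ∈ WupJ R Pos J) : pJ w = w :=
  min_unique h hJ (hpJ w hw.1).1 hw (hpJ w hw.1).2

theorem proj_lt (h : IsBase R Pos Δ) (hJ : J ⊆ Δ) (hpJ : IsProjJ R Pos J pJ)
    {w : V ≃ₗ[ℝ] V} (hw : w ∈ VupJ R Pos Δ J) (v : WsubJ R (Δ \ J)) (hv : v ≠ 1) :
    NN Pos (ppr h hpJ hw.1.1 v : V ≃ₗ[ℝ] V) < NN Pos w := by
  have h1 := hpJ _ (mulW h hw.1.1 v)
  have h2 := NN_le h hJ h1.1.1 h1.2 h1.1.2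
  rw [mul_inv_cancel_left] at h2
  exact lt_of_le_of_lt h2 (NN_lt h Set.sdiff_subset hw.1.1 v.2 (V_neg hw)
    (fun hc => hv (Subtype.ext hc)))

theorem sigma_ne (h : IsBase R Pos Δ) (hJ : J ⊆ Δ) (hpJ : IsProjJ R Pos J pJ)
    {w : V ≃ₗ[ℝ] V} (hw : w ∈ VupJ R Pos Δ J) (u : WupJ R Pos J)
    (hu : sigmaVec R Pos Δ J pJ w u ≠ 0) : w = u ∨ NN Pos (u : V ≃ₗ[ℝ] V) < NN Pos w := by
  have := Wsub_finite h (K := Δ \ J) Set.sdiff_subset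
  have := Fintype.ofFinite (WsubJ R (Δ \ J))
  rw [sigma_eq h hpJ hw.1.1, Finsupp.finsetSum_apply] at hu
  obtain ⟨v, _, hv⟩ := Finset.exists_ne_zero_of_sum_ne_zero hu
  have e : ppr h hpJ hw.1.1 v = u := by
    by_contra hc
    simp [Finsupp.single_apply, hc] at hv
  by_cases h1 : v = 1
  · left
    rw [← e, h1]
    simp [ppr, proj_self h hJ hpJ hw.1]
  · right
    rw [← e]; exact proj_lt h hJ hpJ hw v h1

theorem sigma_self (h : IsBase R Pos Δ) (hJ : J ⊆ Δ) (hpJ : IsProjJ R Pos J pJ)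
    {w : V ≃ₗ[ℝ] V} (hw : w ∈ VupJ R Pos Δ J) :
    sigmaVec R Pos Δ J pJ w ⟨w, hw.1⟩ ≠ 0 := by
  have := Wsub_finite h (K := Δ \ J) Set.sdiff_subset
  have := Fintype.ofFinite (WsubJ R (Δ \ J))
  rw [sigma_eq h hpJ hw.1.1, Finsupp.finsetSum_apply, Finset.sum_eq_single 1]
  · have : ppr h hpJ hw.1.1 1 = ⟨w, hw.1⟩ := by
      apply Subtype.ext; simp [ppr, proj_self h hJ hpJ hw.1]
    simp [this]
  · intro v _ hv
    have : ppr h hpJ hw.1.1 v ≠ ⟨w, hw.1⟩ := by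
      intro hc
      have := proj_lt h hJ hpJ hw v hv
      rw [hc] at this
      exact lt_irrefl _ this
    simp [Finsupp.single_apply, this]
  · simp

theorem dim_part (h : IsBase R Pos Δ) (hJ : J ⊆ Δ) (hpJ : IsProjJ R Pos J pJ) :
    (VupJ R Pos Δ J).ncard ≤ Module.finrank ℚ
      ((WupJ R Pos J →₀ ℚ) ⧸ LinearMap.range (MJd R Pos Δ J ℚ)) := by
  have := Wup_finite R Pos J
  have : Finite (VupJ R Pos Δ J) := (weyl_finite R).subset fun _ hx => hx.1.1
  have := Fintype.ofFinite (VupJ R Pos Δ J)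
  have key : LinearIndependent ℚ (fun w : VupJ R Pos Δ J =>
      ((LinearMap.range (MJd R Pos Δ J ℚ)).liftQ _ (phi_part h hJ hpJ w.2.1.1) :
        Module.Dual ℚ ((WupJ R Pos J →₀ ℚ) ⧸ LinearMap.range (MJd R Pos Δ J ℚ)))) := by
    refine triang (fun w : VupJ R Pos Δ J => NN Pos (w : V ≃ₗ[ℝ] V)) _
      (fun w : VupJ R Pos Δ J => LinearMap.applyₗ (Submodule.Quotient.mk (Finsupp.single (⟨w, w.2.1⟩ : WupJ R Pos J) (1 : ℚ)))) ?_ ?_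
    · intro w
      simpa using sigma_self h hJ hpJ w.2
    · intro i j hij
      have := sigma_ne h hJ hpJ j.2 ⟨i, i.2.1⟩ (by simpa using hij)
      rcases this with h1 | h1
      · exact Or.inl (Subtype.ext h1)
      · exact Or.inr h1
  have := key.fintype_card_le_finrank
  rwa [Subspace.dual_finrank_eq, ← Nat.card_eq_fintype_card, Nat.card_coe_set_eq] at this

end Helpers

/-- The family `{σ(w') : w' ∈ V^J}` is linearly independent over `ℚ` and
is contained in the kernel of the dual map `∂*`; consequently
`dim_ℚ M_J(ℚ) ≥ |V^J|`. -/
theorem statement_13 {V : Type} [AddCommGroup V] [Module ℝ V]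
    (R : RootSystemData V) (Pos Δ : Set V) (hBase : IsBase R Pos Δ)
    (J : Set V) (hJ : J ⊆ Δ)
    (pJ : (V ≃ₗ[ℝ] V) → (V ≃ₗ[ℝ] V)) (hpJ : IsProjJ R Pos J pJ) :
    LinearIndependent ℚ
      (fun w' : ↥(VupJ R Pos Δ J) => sigmaVec R Pos Δ J pJ (w' : V ≃ₗ[ℝ] V)) ∧
    (∀ w' : ↥(VupJ R Pos Δ J),
      MJdstar R Pos Δ J (sigmaVec R Pos Δ J pJ (w' : V ≃ₗ[ℝ] V)) = 0) ∧
    (VupJ R Pos Δ J).ncard ≤ Module.finrank ℚ (MJmod R Pos Δ J ℚ) := by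
  refine ⟨?_, fun w' => ker_part hBase hJ hpJ w'.2.1.1, dim_part hBase hJ hpJ⟩
  refine triang (fun w : VupJ R Pos Δ J => NN Pos (w : V ≃ₗ[ℝ] V)) _
    (fun w : VupJ R Pos Δ J => Finsupp.lapply (⟨w, w.2.1⟩ : WupJ R Pos J)) ?_ ?_
  · intro w
    exact sigma_self hBase hJ hpJ w.2
  · intro i j hij
    rcases sigma_ne hBase hJ hpJ j.2 ⟨i, i.2.1⟩ hij with h1 | h1
    · exact Or.inl (Subtype.ext h1)
    · exact Or.inr h1

end PaperSp
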